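/- arXiv:2102.09849 — 3 statements merged into one kernel-verified Lean document; each statement's English description precedes it below -/
import Mathlib

section
/- Let g>0, h₀>0 and α > 0 be real, define w²_{α,eB}(k) = g h₀ k² (1 + ((α−1)/3) k² + ((α+1)/45) k⁴) / (1 + (α/3) k² + (α/45) k⁴) and w²_{FE}(k) = g h₀ k tanh(k) for real k. Then the function k ↦ w²_{α,eB}(k) − w²_{FE}(k) is big-O of k ↦ k⁸ in the neighborhood filter of 0 if and only if α = 1. -/
open Filter Asymptotics

/-! Near `0`, `tanh k = k - k³/3 + 2k⁵/15 + O(k⁷)`; this follows from the expansions of `sinh` and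
`cosh`, read off the Taylor expansion of `exp`. Multiplying the difference of the two dispersion
relations by the denominator `D`, a positive continuous function and hence harmless for big-O,
leaves `g h₀ (α - 1)/9 * k⁶ + O(k⁸)`, and `c * k⁶ = O(k⁸)` holds only when `c = 0`. -/

/-- A continuous factor is bounded near `0`, so it preserves `O(kⁿ)`. -/
lemma isBigO_pow_of_continuous_mul {u f : ℝ → ℝ} {n : ℕ} (hu : ContinuousAt u 0)
    (hf : f =O[nhds 0] (fun k : ℝ => k ^ n)) :
    (fun k => u k * f k) =O[nhds 0] (fun k : ℝ => k ^ n) := by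
  simpa using (hu.tendsto.isBigO_one ℝ).mul hf

lemma exp_expansion :
    (fun k : ℝ => Real.exp k - (1 + k + k ^ 2 / 2 + k ^ 3 / 6 + k ^ 4 / 24 + k ^ 5 / 120
      + k ^ 6 / 720)) =O[nhds 0] (fun k : ℝ => k ^ 7) := by
  refine (Real.exp_sub_sum_range_isBigO_pow 7).congr_left fun k => ?_
  simp [Finset.sum_range_succ, Nat.factorial]

lemma exp_neg_expansion :
    (fun k : ℝ => Real.exp (-k) - (1 - k + k ^ 2 / 2 - k ^ 3 / 6 + k ^ 4 / 24 - k ^ 5 / 120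
      + k ^ 6 / 720)) =O[nhds 0] (fun k : ℝ => k ^ 7) := by
  have ht : Tendsto (fun k : ℝ => -k) (nhds 0) (nhds 0) := by
    simpa using (continuous_neg (G := ℝ)).tendsto 0
  have h := (exp_expansion.comp_tendsto ht).trans
    (g := fun k : ℝ => (-k) ^ 7) (k := fun k : ℝ => k ^ 7)
    (IsBigO.of_bound 1 (Eventually.of_forall fun k => by simp))
  refine h.congr_left fun k => ?_
  simp only [Function.comp]
  ring

lemma tanh_expansion :
    (fun k : ℝ => Real.tanh k - (k - k ^ 3 / 3 + 2 * k ^ 5 / 15)) =O[nhds 0]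
      (fun k : ℝ => k ^ 7) := by
  have hsinh := (exp_expansion.sub exp_neg_expansion).const_mul_left (1 / 2)
  have hcosh := (exp_expansion.add exp_neg_expansion).const_mul_left (1 / 2)
  have hT := isBigO_pow_of_continuous_mul
    (u := fun k : ℝ => k - k ^ 3 / 3 + 2 * k ^ 5 / 15) (by fun_prop) hcosh
  -- the truncated series satisfy `sinh - cosh * T = k⁷ * (polynomial)`
  have hP := isBigO_pow_of_continuous_mul
    (u := fun k : ℝ => -13 / 240 - 11 / 2160 * k ^ 2 - 1 / 5400 * k ^ 4) (by fun_prop)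
    (isBigO_refl (fun k : ℝ => k ^ 7) (nhds 0))
  have hinv : ContinuousAt (fun k : ℝ => (Real.cosh k)⁻¹) 0 :=
    Real.continuous_cosh.continuousAt.inv₀ (Real.cosh_pos 0).ne'
  refine (isBigO_pow_of_continuous_mul hinv ((hsinh.sub hT).add hP)).congr_left fun k => ?_
  have hc := (Real.cosh_pos k).ne'
  rw [Real.tanh_eq_sinh_div_cosh, inv_mul_eq_iff_eq_mul₀ hc, mul_sub (Real.cosh k), mul_div_cancel₀ _ hc,
    Real.sinh_eq, Real.cosh_eq]
  ring

/-- The dispersion relation of the one-parameter extended Boussinesq model agrees with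
the full Euler dispersion relation up to `O(k⁸)` at `k = 0` if and only if `α = 1`. -/
theorem stmt3 (g h₀ α : ℝ) (hg : 0 < g) (hh : 0 < h₀) (hα : 0 < α) :
    (fun k : ℝ =>
        g * h₀ * k ^ 2 * (1 + (α - 1) / 3 * k ^ 2 + (α + 1) / 45 * k ^ 4)
            / (1 + α / 3 * k ^ 2 + α / 45 * k ^ 4)
          - g * h₀ * k * Real.tanh k)
      =O[nhds 0] (fun k : ℝ => k ^ 8) ↔ α = 1 := by
  have hD : ∀ k : ℝ, 1 + α / 3 * k ^ 2 + α / 45 * k ^ 4 ≠ 0 := fun k => by positivity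
  have hDc : ContinuousAt (fun k : ℝ => 1 + α / 3 * k ^ 2 + α / 45 * k ^ 4) 0 := by fun_prop
  have htanh : (fun k : ℝ => k * (Real.tanh k - (k - k ^ 3 / 3 + 2 * k ^ 5 / 15)))
      =O[nhds 0] (fun k : ℝ => k ^ 8) :=
    ((isBigO_refl (fun k : ℝ => k) (nhds 0)).mul tanh_expansion).congr_right fun k => by ring
  have hrem := (isBigO_pow_of_continuous_mul
    (u := fun k : ℝ => g * h₀ * (-α / 27 - 2 * α / 675 * k ^ 2)) (by fun_prop)
    (isBigO_refl (fun k : ℝ => k ^ 8) (nhds 0))).sub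
    (isBigO_pow_of_continuous_mul (hDc.const_mul (g * h₀)) htanh)
  constructor
  · intro h
    have h6 : (fun k : ℝ => g * h₀ * (α - 1) / 9 * k ^ 6) =O[nhds 0] (fun k : ℝ => k ^ 8) := by
      refine ((isBigO_pow_of_continuous_mul hDc h).sub hrem).congr_left fun k => ?_
      rw [mul_sub, mul_div_cancel₀ _ (hD k)]
      ring
    by_contra hne
    have hc : g * h₀ * (α - 1) / 9 ≠ 0 := by
      have := sub_ne_zero.mpr hne
      positivity
    have ho : (fun k : ℝ => k ^ 6) =o[nhds 0] (fun k : ℝ => k ^ 6) :=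
      ((isBigO_const_mul_left_iff hc).mp h6).trans_isLittleO
        (isLittleO_pow_pow (by norm_num))
    refine isLittleO_irrefl ?_ ho
    -- `k ^ 6` is nonzero at points arbitrarily close to `0`
    have hf : ∃ᶠ k : ℝ in nhdsWithin 0 {0}ᶜ, k ^ 6 ≠ 0 :=
      (Eventually.mono (self_mem_nhdsWithin : ({0}ᶜ : Set ℝ) ∈ nhdsWithin 0 {0}ᶜ)
        fun k hk => pow_ne_zero 6 hk).frequently
    exact hf.filter_mono nhdsWithin_le_nhds
  · rintro rfl
    refine (isBigO_pow_of_continuous_mul (hDc.inv₀ (hD 0)) hrem).congr_left fun k => ?_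
    simp only [Pi.inv_apply]
    rw [inv_mul_eq_iff_eq_mul₀ (hD k), mul_sub (1 + 1 / 3 * k ^ 2 + 1 / 45 * k ^ 4),
      mul_div_cancel₀ _ (hD k)]
    ring
end

section
/- Consider the linearization of the dimensionalized extended Boussinesq system (case α = 1) about a steady state (ζ₀, v₀) with constant real values: ∂_t ζ̃ + (h₀ + ζ₀) ∂_x ṽ + v₀ ∂_x ζ̃ = 0 and (1 + 𝒯[0] − 𝔗)(∂_t ṽ + v₀ ∂_x ṽ) + g ∂_x ζ̃ + (2/45) g ∂_x⁵ ζ̃ + (2/3) g ζ₀ ∂_x³ ζ̃ = 0. Let g>0, h₀ + ζ₀ > 0, and let k,w be real with k≠0. If the plane-wave functions ζ̃(t,x) = ζ̄ e^{i(kx−wt)}, ṽ(t,x) = v̄ e^{i(kx−wt)} with complex amplitudes ζ̄≠0 and v̄ satisfy both equations for all (t,x) ∈ ℝ², then (w − k v₀)² / (g (h₀ + ζ₀) k²) = (1 − (2/3) k² ζ₀ + (2/45) k⁴) / (1 + (1/3) k² + (1/45) k⁴). -/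
/-!
On plane waves every derivative acts as a multiplier: `∂_x` is `i k` and `∂_t` is `-i w`. Evaluated
at the origin, where the exponential is `1`, the two equations become linear relations between the
amplitudes,
`(h₀ + ζ₀) k v̄ = (w - k v₀) ζ̄` and `D (w - k v₀) v̄ = g k N ζ̄`,
where `N` and `D` are the numerator and denominator of the right-hand side of the dispersion
relation. Eliminating `v̄` and cancelling `ζ̄ ≠ 0` gives `D (w - k v₀)² = g (h₀ + ζ₀) k² N`, and all
denominators are positive. The multiplier rules are `deriv_planeWave_time` and
`iteratedDeriv_planeWave`.
-/

theorem deriv_planeWave_space (a c : ℂ) (k x : ℝ) :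
    deriv (fun y : ℝ => a * Complex.exp (Complex.I * ((k : ℂ) * y - c))) x
      = (a * (Complex.I * k)) * Complex.exp (Complex.I * ((k : ℂ) * x - c)) := by
  have h : HasDerivAt (fun y : ℝ => Complex.I * ((k : ℂ) * y - c)) (Complex.I * ((k : ℂ) * 1)) x :=
    (((Complex.ofRealCLM.hasDerivAt (x := x)).const_mul (k : ℂ)).sub_const c).const_mul Complex.I
  rw [(h.cexp.const_mul a).deriv]
  ring

theorem deriv_planeWave_time (a c : ℂ) (w t : ℝ) :
    deriv (fun s : ℝ => a * Complex.exp (Complex.I * (c - (w : ℂ) * s))) t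
      = (a * (-(Complex.I * w))) * Complex.exp (Complex.I * (c - (w : ℂ) * t)) := by
  have h : HasDerivAt (fun s : ℝ => Complex.I * (c - (w : ℂ) * s))
      (Complex.I * (-((w : ℂ) * 1))) t :=
    (((Complex.ofRealCLM.hasDerivAt (x := t)).const_mul (w : ℂ)).const_sub c).const_mul Complex.I
  rw [(h.cexp.const_mul a).deriv]
  ring

theorem iteratedDeriv_planeWave (n : ℕ) (a c : ℂ) (k : ℝ) :
    iteratedDeriv n (fun y : ℝ => a * Complex.exp (Complex.I * ((k : ℂ) * y - c)))
      = fun y : ℝ =>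
        (a * (Complex.I * k) ^ n) * Complex.exp (Complex.I * ((k : ℂ) * y - c)) := by
  induction n with
  | zero => simp
  | succ n ih =>
    rw [iteratedDeriv_succ, ih]
    funext x
    rw [deriv_planeWave_space, pow_succ]
    ring

/-- Linearization of the dimensionalized extended Boussinesq system (α = 1) about a
constant steady state `(ζ₀, v₀)`: plane-wave solutions satisfy the dispersion relation
`(w − k v₀)² / (g (h₀+ζ₀) k²) = (1 − (2/3)k²ζ₀ + (2/45)k⁴) / (1 + (1/3)k² + (1/45)k⁴)`. -/
theorem stmt4 (g h₀ ζ₀ v₀ k w : ℝ) (ζbar vbar : ℂ)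
    (hg : 0 < g) (hh : 0 < h₀ + ζ₀) (hk : k ≠ 0) (hζbar : ζbar ≠ 0)
    (ζ v : ℝ → ℝ → ℂ)
    (hζdef : ∀ t x : ℝ, ζ t x = ζbar * Complex.exp (Complex.I * ((k : ℂ) * x - (w : ℂ) * t)))
    (hvdef : ∀ t x : ℝ, v t x = vbar * Complex.exp (Complex.I * ((k : ℂ) * x - (w : ℂ) * t)))
    -- first equation: ∂_t ζ̃ + (h₀ + ζ₀) ∂_x ṽ + v₀ ∂_x ζ̃ = 0
    (heq1 : ∀ t x : ℝ, deriv (fun s => ζ s x) t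
      + ((h₀ + ζ₀ : ℝ) : ℂ) * deriv (fun y => v t y) x
      + (v₀ : ℂ) * deriv (fun y => ζ t y) x = 0)
    -- second equation: (1 + 𝒯[0] − 𝔗)(∂_t ṽ + v₀ ∂_x ṽ) + g ∂_x ζ̃
    --                  + (2/45) g ∂_x⁵ ζ̃ + (2/3) g ζ₀ ∂_x³ ζ̃ = 0
    (heq2 : ∀ t x : ℝ,
      (fun E : ℝ → ℂ =>
          E x - (1 / 3 : ℂ) * iteratedDeriv 2 E x + (1 / 45 : ℂ) * iteratedDeriv 4 E x)
        (fun y => deriv (fun s => v s y) t + (v₀ : ℂ) * deriv (fun y' => v t y') y)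
      + (g : ℂ) * deriv (fun y => ζ t y) x
      + ((2 / 45 * g : ℝ) : ℂ) * iteratedDeriv 5 (fun y => ζ t y) x
      + ((2 / 3 * g * ζ₀ : ℝ) : ℂ) * iteratedDeriv 3 (fun y => ζ t y) x = 0) :
    (w - k * v₀) ^ 2 / (g * (h₀ + ζ₀) * k ^ 2)
      = (1 - 2 / 3 * k ^ 2 * ζ₀ + 2 / 45 * k ^ 4)
        / (1 + 1 / 3 * k ^ 2 + 1 / 45 * k ^ 4) := by
  have e1 := heq1 0 0
  have e2 := heq2 0 0
  -- The function that `1 + 𝒯[0] − 𝔗` acts on is again a plane wave.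
  have hE : (fun y : ℝ => deriv (fun s => v s y) 0 + (v₀ : ℂ) * deriv (fun y' => v 0 y') y)
      = fun y : ℝ => (vbar * (Complex.I * (k * v₀ - w)))
          * Complex.exp (Complex.I * ((k : ℂ) * y - (w : ℂ) * (0 : ℝ))) := by
    funext y
    simp only [hvdef]
    rw [deriv_planeWave_time, deriv_planeWave_space]
    ring
  rw [hE] at e2
  simp only [hζdef, hvdef, deriv_planeWave_time, deriv_planeWave_space,
    iteratedDeriv_planeWave] at e1 e2
  simp only [Complex.ofReal_zero, mul_zero, sub_zero, Complex.exp_zero, mul_one] at e1 e2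
  push_cast at e1 e2
  have r1 : ((h₀ : ℂ) + ζ₀) * k * vbar = (w - k * v₀) * ζbar := by
    apply mul_left_cancel₀ Complex.I_ne_zero
    linear_combination e1
  have r2 : (1 + 1 / 3 * (k : ℂ) ^ 2 + 1 / 45 * (k : ℂ) ^ 4) * (w - k * v₀) * vbar
      = g * k * (1 - 2 / 3 * (k : ℂ) ^ 2 * ζ₀ + 2 / 45 * (k : ℂ) ^ 4) * ζbar := by
    have h2 : Complex.I ^ 2 = -1 := Complex.I_sq
    have h3 : Complex.I ^ 3 = -Complex.I := Complex.I_pow_three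
    have h4 : Complex.I ^ 4 = 1 := Complex.I_pow_four
    have h5 : Complex.I ^ 5 = Complex.I := by rw [pow_succ, h4, one_mul]
    simp only [mul_pow, h2, h3, h4, h5] at e2
    apply mul_left_cancel₀ Complex.I_ne_zero
    linear_combination -e2
  have r3 : (1 + 1 / 3 * (k : ℂ) ^ 2 + 1 / 45 * (k : ℂ) ^ 4) * (w - k * v₀) ^ 2
      = g * (h₀ + ζ₀) * k ^ 2 * (1 - 2 / 3 * (k : ℂ) ^ 2 * ζ₀ + 2 / 45 * (k : ℂ) ^ 4) := by
    apply mul_right_cancel₀ hζbar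
    linear_combination ((h₀ : ℂ) + ζ₀) * k * r2
      - (1 + 1 / 3 * (k : ℂ) ^ 2 + 1 / 45 * (k : ℂ) ^ 4) * (w - k * v₀) * r1
  have r4 : (1 + 1 / 3 * k ^ 2 + 1 / 45 * k ^ 4) * (w - k * v₀) ^ 2
      = g * (h₀ + ζ₀) * k ^ 2 * (1 - 2 / 3 * k ^ 2 * ζ₀ + 2 / 45 * k ^ 4) := by
    apply Complex.ofReal_injective
    push_cast
    exact r3
  have hA : g * (h₀ + ζ₀) * k ^ 2 ≠ 0 := by positivity
  have hD : 1 + 1 / 3 * k ^ 2 + 1 / 45 * k ^ 4 ≠ 0 := by positivity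
  rw [div_eq_div_iff hA hD]
  linear_combination r4
end

section
/- Consider the linearization about the rest state of the dimensionalized extended Boussinesq system with factorized high order derivatives and parameter α: ∂_t ζ + h₀ ∂_x v = 0 and (1 + α𝒯[0] − α𝔗)(∂_t v + ((α−1)/α) g ∂_x ζ) + (1/α) g ∂_x ζ + (2/45) ∂_x⁴ φ = 0, where the auxiliary function φ satisfies (1 + α𝒯[0])φ = g ∂_x ζ, i.e. φ − (α/3) ∂_x² φ = g ∂_x ζ. Let g>0, h₀>0, α>0, and let k,w be real with k≠0. If ζ(t,x) = ζ̄ e^{i(kx−wt)}, v(t,x) = v̄ e^{i(kx−wt)} and φ(t,x) = φ̄ e^{i(kx−wt)} with complex amplitudes ζ̄ ≠ 0, v̄, φ̄ satisfy all three equations for all (t,x) ∈ ℝ², then w² = g h₀ k² (1 + ((α−1)/3) k² + (k⁴/45)(α − 1 + 2/(1 + (α/3) k²))) / (1 + (α/3) k² + (α/45) k⁴). -/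
/-!
On a plane wave `A * exp (i (k x - w t))` the operators `∂_x` and `∂_t` act as multiplication by
`i k` and `-i w` (`deriv_planeWave_x`, `iteratedDeriv_planeWave_x`, `deriv_planeWave_t`).
Evaluated at `t = x = 0`, the three equations become linear relations between the amplitudes.
The first expresses `v̄` and the third `φ̄` in terms of `ζ̄`; inserting both in the second gives
`ζ̄` times a real polynomial expression equal to zero. Cancelling `ζ̄ ≠ 0` and dividing by the
positive quantities `1 + (α/3) k²` and `1 + (α/3) k² + (α/45) k⁴` yields the dispersion relation.
-/

lemma deriv_planeWave_x (A : ℂ) (k w t : ℝ) :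
    deriv (fun x : ℝ => A * Complex.exp (Complex.I * ((k : ℂ) * x - (w : ℂ) * t)))
      = fun x : ℝ => (A * (Complex.I * k))
          * Complex.exp (Complex.I * ((k : ℂ) * x - (w : ℂ) * t)) := by
  funext x
  have h : HasDerivAt (fun x : ℝ => Complex.I * ((k : ℂ) * x - (w : ℂ) * t))
      (Complex.I * ((k : ℂ) * 1)) x :=
    (((Complex.ofRealCLM.hasDerivAt (x := x)).const_mul (k : ℂ)).sub_const _).const_mul _
  rw [(h.cexp.const_mul A).deriv]
  ring

lemma iteratedDeriv_planeWave_x (n : ℕ) (A : ℂ) (k w t : ℝ) :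
    iteratedDeriv n (fun x : ℝ => A * Complex.exp (Complex.I * ((k : ℂ) * x - (w : ℂ) * t)))
      = fun x : ℝ => (A * (Complex.I * k) ^ n)
          * Complex.exp (Complex.I * ((k : ℂ) * x - (w : ℂ) * t)) := by
  induction n with
  | zero => simp
  | succ n ih => rw [iteratedDeriv_succ, ih, deriv_planeWave_x, pow_succ, mul_assoc A]

lemma deriv_planeWave_t (A : ℂ) (k w t x : ℝ) :
    deriv (fun s : ℝ => A * Complex.exp (Complex.I * ((k : ℂ) * x - (w : ℂ) * s))) t
      = (A * (-Complex.I * w)) * Complex.exp (Complex.I * ((k : ℂ) * x - (w : ℂ) * t)) := by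
  have h : HasDerivAt (fun s : ℝ => Complex.I * ((k : ℂ) * x - (w : ℂ) * s))
      (Complex.I * (-((w : ℂ) * 1))) t :=
    (((Complex.ofRealCLM.hasDerivAt (x := t)).const_mul (w : ℂ)).const_sub _).const_mul _
  rw [(h.cexp.const_mul A).deriv]
  ring

/-- Linearization about the rest state of the dimensionalized extended Boussinesq system
with factorized high order derivatives and parameter `α`: plane-wave solutions satisfy
`w² = g h₀ k² (1 + ((α−1)/3)k² + (k⁴/45)(α − 1 + 2/(1 + (α/3)k²)))
      / (1 + (α/3)k² + (α/45)k⁴)`. -/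
theorem stmt15 (g h₀ α k w : ℝ) (ζbar vbar φbar : ℂ)
    (hg : 0 < g) (hh : 0 < h₀) (hα : 0 < α) (hk : k ≠ 0) (hζbar : ζbar ≠ 0)
    (ζ v φ : ℝ → ℝ → ℂ)
    (hζdef : ∀ t x : ℝ, ζ t x = ζbar * Complex.exp (Complex.I * ((k : ℂ) * x - (w : ℂ) * t)))
    (hvdef : ∀ t x : ℝ, v t x = vbar * Complex.exp (Complex.I * ((k : ℂ) * x - (w : ℂ) * t)))
    (hφdef : ∀ t x : ℝ, φ t x = φbar * Complex.exp (Complex.I * ((k : ℂ) * x - (w : ℂ) * t)))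
    -- first equation: ∂_t ζ + h₀ ∂_x v = 0
    (heq1 : ∀ t x : ℝ, deriv (fun s => ζ s x) t + (h₀ : ℂ) * deriv (fun y => v t y) x = 0)
    -- second equation: (1 + α𝒯[0] − α𝔗)(∂_t v + ((α−1)/α) g ∂_x ζ)
    --                  + (1/α) g ∂_x ζ + (2/45) ∂_x⁴ φ = 0
    (heq2 : ∀ t x : ℝ,
      (fun E : ℝ → ℂ =>
          E x - ((α : ℂ) / 3) * iteratedDeriv 2 E x + ((α : ℂ) / 45) * iteratedDeriv 4 E x)
        (fun y => deriv (fun s => v s y) t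
          + (((α - 1) / α * g : ℝ) : ℂ) * deriv (fun y' => ζ t y') y)
      + ((1 / α * g : ℝ) : ℂ) * deriv (fun y => ζ t y) x
      + (2 / 45 : ℂ) * iteratedDeriv 4 (fun y => φ t y) x = 0)
    -- auxiliary elliptic equation: φ − (α/3) ∂_x² φ = g ∂_x ζ
    (heq3 : ∀ t x : ℝ,
      φ t x - ((α : ℂ) / 3) * iteratedDeriv 2 (fun y => φ t y) x
        = (g : ℂ) * deriv (fun y => ζ t y) x) :
    w ^ 2 = g * h₀ * k ^ 2
        * (1 + (α - 1) / 3 * k ^ 2 + k ^ 4 / 45 * (α - 1 + 2 / (1 + α / 3 * k ^ 2)))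
      / (1 + α / 3 * k ^ 2 + α / 45 * k ^ 4) := by
  have I2 : Complex.I ^ 2 = -1 := Complex.I_sq
  have I4 : Complex.I ^ 4 = 1 := Complex.I_pow_four
  have e1 := heq1 0 0
  have e2 := heq2 0 0
  have e3 := heq3 0 0
  simp only [hζdef, hvdef] at e1
  simp only [hζdef, hvdef, hφdef] at e2
  simp only [hζdef, hφdef] at e3
  simp only [deriv_planeWave_x, deriv_planeWave_t] at e1
  simp only [deriv_planeWave_x, deriv_planeWave_t] at e2
  -- the argument of the fourth-order operator is again a plane wave
  simp only [← mul_assoc, ← add_mul] at e2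
  simp only [iteratedDeriv_planeWave_x] at e2
  simp only [deriv_planeWave_x, iteratedDeriv_planeWave_x] at e3
  simp only [Complex.ofReal_zero, mul_zero, sub_zero, Complex.exp_zero, mul_one, mul_pow,
    I2, I4] at e1 e2 e3
  have hαC : (α : ℂ) ≠ 0 := by exact_mod_cast hα.ne'
  obtain ⟨d, hd⟩ : ∃ d : ℝ, d = 1 / α := ⟨_, rfl⟩
  have hdα : (α : ℂ) * d = 1 := by rw [hd]; push_cast; field_simp
  have hc : (α - 1) / α = 1 - d := by rw [hd]; field_simp
  rw [hc, ← hd] at e2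
  push_cast at e2
  have e1' : (h₀ : ℂ) * k * vbar - w * ζbar = 0 := by
    linear_combination (-Complex.I) * e1 + (h₀ * k * vbar - w * ζbar) * I2
  have key : ζbar * ((w ^ 2 * (1 + α / 3 * k ^ 2 + α / 45 * k ^ 4) * (1 + α / 3 * k ^ 2)
      - g * h₀ * k ^ 2 * ((1 + (α - 1) / 3 * k ^ 2 + (α - 1) / 45 * k ^ 4)
        * (1 + α / 3 * k ^ 2) + 2 / 45 * k ^ 4) : ℝ) : ℂ) = 0 := by
    push_cast
    linear_combination (Complex.I * h₀ * k * (1 + α / 3 * k ^ 2)) * e2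
      - (2 / 45 * k ^ 5 * Complex.I * h₀) * e3
      - ((1 + α / 3 * k ^ 2 + α / 45 * k ^ 4) * w * (1 + α / 3 * k ^ 2)) * e1'
      - (h₀ * k * (1 + α / 3 * k ^ 2) * ((1 + α / 3 * k ^ 2 + α / 45 * k ^ 4)
          * (-w * vbar + (1 - d) * g * k * ζbar) + d * g * k * ζbar)
        + 2 / 45 * k ^ 6 * h₀ * g * ζbar) * I2
      - (g * h₀ * k ^ 2 * (1 + α / 3 * k ^ 2) * ζbar * (k ^ 2 / 3 + k ^ 4 / 45)) * hdα
  have hreal := Complex.ofReal_eq_zero.mp ((mul_eq_zero.mp key).resolve_left hζbar)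
  have hP : 0 < 1 + α / 3 * k ^ 2 := by positivity
  have hD : 0 < 1 + α / 3 * k ^ 2 + α / 45 * k ^ 4 := by positivity
  have hinv : (1 + α / 3 * k ^ 2) * (2 / (1 + α / 3 * k ^ 2)) = 2 := mul_div_cancel₀ 2 hP.ne'
  rw [eq_div_iff hD.ne']
  refine mul_right_cancel₀ hP.ne' ?_
  linear_combination hreal - (g * h₀ * k ^ 2 * (k ^ 4 / 45)) * hinv
end
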